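/- Let k ∈ ℤ≥0 and let M ∈ (0,1) be the unique real number satisfying ∫_0^M t^{k/2}·(1−t)^{m/2−2} dt = ∫_M^1 t^{k/2}·(1−t)^{m/2−2} dt (the median of the Beta(k/2+1, m/2−1) distribution). If N > 4·M^{1/2}/(1−M), then the Poincaré series P_{Γ,χ}f_{k,m} is not identically zero on ℍ. -/

import Mathlib

open Complex MeasureTheory Filter Topology
open scoped Real

set_option autoImplicit false

noncomputable section

/-- `SL₂(ℤ)`. -/
abbrev SL2Z := Matrix.SpecialLinearGroup (Fin 2) ℤ

/-- The upper half-plane, as a subset of `ℂ`. -/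
def UH : Set ℂ := {z : ℂ | 0 < z.im}

/-- The `(i,j)` entry of `γ ∈ SL₂(ℤ)`, as a complex number. -/
def entry (γ : SL2Z) (i j : Fin 2) : ℂ :=
  ((γ : Matrix (Fin 2) (Fin 2) ℤ) i j : ℂ)

/-- The Möbius action of `SL₂(ℤ)` on the upper half-plane (as a map on `ℂ`). -/
def act (γ : SL2Z) (z : ℂ) : ℂ :=
  (entry γ 0 0 * z + entry γ 0 1) / (entry γ 1 0 * z + entry γ 1 1)

/-- The hyperbolic measure `dv(x+iy) = dx·dy/y²` on the upper half-plane. -/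
def hypMeasure : Measure ℂ :=
  ((volume : Measure ℂ).withDensity fun z => ENNReal.ofReal (1 / z.im ^ 2)).restrict UH

/-- A multiplier system on `Γ`: holomorphic square roots `η_γ` of `z ↦ c_γ z + d_γ`
satisfying the cocycle condition. -/
structure IsMultiplierSystem (Γ : Subgroup SL2Z) (η : Γ → ℂ → ℂ) : Prop where
  holo : ∀ γ : Γ, DifferentiableOn ℂ (η γ) UH
  sq : ∀ γ : Γ, ∀ z ∈ UH, η γ z ^ 2 = entry (γ : SL2Z) 1 0 * z + entry (γ : SL2Z) 1 1
  cocycle : ∀ γ₁ γ₂ : Γ, ∀ z ∈ UH,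
    η (γ₁ * γ₂) z = η γ₁ (act (γ₂ : SL2Z) z) * η γ₂ z

/-- `χ` has finite order. -/
def HasFiniteOrderChar (Γ : Subgroup SL2Z) (χ : Γ →* ℂˣ) : Prop :=
  ∃ n : ℕ, 0 < n ∧ ∀ γ : Γ, χ γ ^ n = 1

/-- `f` is a cusp form of weight `m = 5/2 + j` for `(Γ, η, χ)`; here
`η γ z ^ (-(5 + 2j))` is the integer power `η_γ(z)^{-2m}`, and the boundedness of
`‖f‖·(Im z)^{m/2}` on the upper half-plane expresses the vanishing at all cusps. -/
def IsCuspForm (Γ : Subgroup SL2Z) (η : Γ → ℂ → ℂ) (χ : Γ →* ℂˣ) (m : ℝ) (j : ℕ)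
    (f : ℂ → ℂ) : Prop :=
  DifferentiableOn ℂ f UH ∧
  (∀ γ : Γ, ∀ z ∈ UH,
    f (act (γ : SL2Z) z) * η γ z ^ (-(5 + 2 * (j : ℤ))) = (χ γ : ℂ) * f z) ∧
  ∃ C : ℝ, ∀ z ∈ UH, ‖f z‖ * z.im ^ (m / 2) ≤ C

/-- A measurable fundamental domain for the action of `Γ` on the upper half-plane,
with respect to the hyperbolic measure. -/
def IsFundDom (Γ : Subgroup SL2Z) (F : Set ℂ) : Prop :=
  MeasurableSet F ∧ F ⊆ UH ∧
  hypMeasure (UH \ ⋃ γ : Γ, act (γ : SL2Z) '' F) = 0 ∧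
  ∀ γ : Γ, γ ≠ 1 → hypMeasure (F ∩ act (γ : SL2Z) '' F) = 0

/-- `f_{k,m}(z) = (2i)^m (z-i)^k / (z+i)^{m+k}` (principal powers). -/
def fkm (m : ℝ) (k : ℕ) (z : ℂ) : ℂ :=
  (2 * I) ^ (m : ℂ) * (z - I) ^ k / (z + I) ^ ((m : ℂ) + (k : ℂ))

/-- The term indexed by `γ` of the Poincaré series `P_{Γ,χ} f_{k,m}`;
`η γ z ^ (-(5 + 2j))` is the integer power `η_γ(z)^{-2m}` for `m = 5/2 + j`. -/
def PTerm (Γ : Subgroup SL2Z) (η : Γ → ℂ → ℂ) (χ : Γ →* ℂˣ) (m : ℝ) (j : ℕ) (k : ℕ)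
    (γ : Γ) (z : ℂ) : ℂ :=
  (starRingEnd ℂ) (χ γ : ℂ) * fkm m k (act (γ : SL2Z) z) * η γ z ^ (-(5 + 2 * (j : ℤ)))

/-- The Poincaré series `P_{Γ,χ} f_{k,m}`. -/
def PoincareP (Γ : Subgroup SL2Z) (η : Γ → ℂ → ℂ) (χ : Γ →* ℂˣ) (m : ℝ) (j : ℕ) (k : ℕ)
    (z : ℂ) : ℂ :=
  ∑' γ : Γ, PTerm Γ η χ m j k γ z

/-!
If `w` is a weight for which `‖T g x‖ * w x = H (g • x)` and the sum of the `T g` vanishes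
identically, then isolating the term `g = 1` gives `H x ≤ ∑ H (g • x)` over `g ≠ 1`. Integrating
over a set `C` that is disjoint from its translates shows that the `H`-mass of `C` is at most that
of its complement. Hence a set `C` carrying more than half of the mass forces the sum to be nonzero.

For the Poincaré series the weight is `(Im z) ^ (m / 2)`, and `H` is a function of the hyperbolic
distance to `i` only. Take for `C` the ball about `i` of radius `r = arsinh (N / 2)`. Its translates
are disjoint from it because `cosh (d (γ i, i)) = 1 + ((a - d) ^ 2 + (b + c) ^ 2) / 2`, which on
`Γ(N)` is either `1` or at least `1 + N ^ 2 / 2 = cosh (2 r)`. The value `1` would force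
`γ = 1` or put `-1` into `Γ`, which the cocycle condition excludes: it gives `η₋₁ ^ 2 = η₁ = 1`,
whereas `η₋₁ ^ 2 = -1` by definition. In the coordinate `t = ‖w‖ ^ 2` on the unit disc, the mass
becomes a Beta integral, `C` becomes `t < tanh (r / 2) ^ 2`, and `4 √M / (1 - M) < N` becomes
`M < tanh (r / 2) ^ 2`, so `C` reaches beyond the median.
-/

open scoped ENNReal UpperHalfPlane MatrixGroups Pointwise

section NonvanishingCriterion

theorem tsum_ne_zero_of_tsum_compl_enorm_lt {ι E : Type*} [NormedAddCommGroup E]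
    [CompleteSpace E] {f : ι → E} {i : ι} (h : ∑' j : ({i}ᶜ : Set ι), ‖f j‖ₑ < ‖f i‖ₑ) :
    ∑' j, f j ≠ 0 := by
  have hsummable_compl : Summable fun j : ({i}ᶜ : Set ι) => f j :=
    .of_nnnorm (ENNReal.tsum_coe_ne_top_iff_summable.mp (h.trans_le le_top).ne)
  have hsummable : Summable f := (Set.finite_singleton i).summable_compl_iff.mp hsummable_compl
  intro hzero
  have hfi : f i = -∑' j : ({i}ᶜ : Set ι), f j := by
    rw [← hsummable.tsum_subtype_add_tsum_subtype_compl {i}, tsum_singleton] at hzero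
    exact eq_neg_of_add_eq_zero_left hzero
  rw [hfi, enorm_neg] at h
  exact h.not_ge enorm_tsum_le_tsum_enorm

variable {G α : Type*} [Group G] [Countable G] [MulAction G α] [MeasurableSpace α]
  [MeasurableConstSMul G α] {μ : Measure α} [SMulInvariantMeasure G α μ]
  {H : α → ℝ≥0∞} {C : Set α}

theorem tsum_compl_one_setLIntegral_smul_le (hH : Measurable H) (hC : MeasurableSet C)
    (hdisj : ∀ g : G, g ≠ 1 → Disjoint C (g • C)) :
    ∫⁻ x in C, ∑' g : ({1}ᶜ : Set G), H ((g : G) • x) ∂μ ≤ ∫⁻ x in Cᶜ, H x ∂μ := by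
  have hpairwise : Pairwise (Function.onFun Disjoint fun g : ({1}ᶜ : Set G) => (g : G) • C) := by
    intro g h hgh
    rw [Function.onFun, Set.disjoint_smul_set_left, smul_smul]
    exact hdisj _ fun h1 => hgh (Subtype.ext (inv_mul_eq_one.mp h1))
  calc ∫⁻ x in C, ∑' g : ({1}ᶜ : Set G), H ((g : G) • x) ∂μ
      = ∑' g : ({1}ᶜ : Set G), ∫⁻ x in C, H ((g : G) • x) ∂μ :=
        lintegral_tsum fun g => (hH.comp (measurable_const_smul (g : G))).aemeasurable
    _ = ∑' g : ({1}ᶜ : Set G), ∫⁻ x in (g : G) • C, H x ∂μ :=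
        tsum_congr fun g => (measurePreserving_smul (g : G) μ).setLIntegral_comp_emb
          (measurableEmbedding_const_smul _) _ _
    _ = ∫⁻ x in ⋃ g : ({1}ᶜ : Set G), (g : G) • C, H x ∂μ :=
        (lintegral_iUnion (fun g => hC.const_smul _) hpairwise _).symm
    _ ≤ ∫⁻ x in Cᶜ, H x ∂μ :=
        lintegral_mono_set <| Set.iUnion_subset fun g =>
          (hdisj g g.2).subset_compl_left

theorem exists_tsum_ne_zero_of_lintegral_compl_lt {E : Type*} [NormedAddCommGroup E]
    [CompleteSpace E] {T : G → α → E} {w : α → ℝ≥0∞} (hH : Measurable H) (hC : MeasurableSet C)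
    (hT : ∀ g x, ‖T g x‖ₑ * w x = H (g • x)) (hdisj : ∀ g : G, g ≠ 1 → Disjoint C (g • C))
    (hlt : ∫⁻ x in Cᶜ, H x ∂μ < ∫⁻ x in C, H x ∂μ) : ∃ x, ∑' g, T g x ≠ 0 := by
  by_contra! hzero
  have hle (x : α) : H x ≤ ∑' g : ({1}ᶜ : Set G), H ((g : G) • x) := by
    rw [← one_smul G x, ← hT 1 x, one_smul]
    simp only [← hT, ENNReal.tsum_mul_right]
    gcongr
    exact not_lt.mp fun h => tsum_ne_zero_of_tsum_compl_enorm_lt h (hzero x)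
  exact hlt.not_ge ((lintegral_mono hle).trans
    (tsum_compl_one_setLIntegral_smul_le hH hC hdisj))

end NonvanishingCriterion

section HyperbolicDisplacement

theorem disjoint_ball_smul_ball {G X : Type*} [Group G] [PseudoMetricSpace X] [MulAction G X]
    [IsIsometricSMul G X] {g : G} {x : X} {r : ℝ} (h : 2 * r ≤ dist (g • x) x) :
    Disjoint (Metric.ball x r) (g • Metric.ball x r) := by
  rw [Metric.smul_ball]
  exact Metric.ball_disjoint_ball (by rwa [← two_mul, dist_comm])

variable {R : Type*} [CommRing R] [Algebra R ℝ]

instance isIsometricSMul_specialLinearGroup : IsIsometricSMul SL(2, R) ℍ :=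
  ⟨fun g => isometry_smul ℍ (Matrix.SpecialLinearGroup.map (algebraMap R ℝ) g)⟩

instance smulInvariantMeasure_specialLinearGroup :
    SMulInvariantMeasure SL(2, R) ℍ (volume : Measure ℍ) :=
  ⟨fun g _ hs => measure_preimage_smul_of_nullMeasurableSet (μ := (volume : Measure ℍ))
    hs.nullMeasurableSet (Matrix.SpecialLinearGroup.mapGL ℝ g)⟩

instance countable_specialLinearGroup [Countable R] : Countable SL(2, R) :=
  have : Countable (Matrix (Fin 2) (Fin 2) R) := inferInstanceAs (Countable (Fin 2 → Fin 2 → R))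
  Subtype.countable

theorem cosh_dist_smul_I (g : SL(2, ℤ)) :
    Real.cosh (dist (g • UpperHalfPlane.I) UpperHalfPlane.I) =
      1 + ((g 0 0 - g 1 1) ^ 2 + (g 0 1 + g 1 0) ^ 2 : ℤ) / 2 := by
  have hdenom : (g 1 0 * I + g 1 1 : ℂ) ≠ 0 := by
    have h := UpperHalfPlane.denom_ne_zero (g : GL (Fin 2) ℝ) UpperHalfPlane.I
    rwa [ModularGroup.denom_apply] at h
  have him : (g • UpperHalfPlane.I).im = 1 / ‖(g 1 0 * I + g 1 1 : ℂ)‖ ^ 2 := by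
    rw [ModularGroup.im_smul_eq_div_normSq, ModularGroup.denom_apply, Complex.normSq_eq_norm_sq]
    rfl
  have hsub : ((g • UpperHalfPlane.I : ℍ) : ℂ) - I =
      ((g 0 1 + g 1 0 : ℝ) + (g 0 0 - g 1 1 : ℝ) * I) / (g 1 0 * I + g 1 1) := by
    rw [UpperHalfPlane.coe_specialLinearGroup_apply, eq_div_iff hdenom, sub_mul]
    simp only [algebraMap_int_eq, eq_intCast, ofReal_intCast, UpperHalfPlane.coe_I]
    rw [div_mul_cancel₀ _ hdenom]
    push_cast
    linear_combination -(g 1 0 : ℂ) * I_sq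
  rw [UpperHalfPlane.cosh_dist, UpperHalfPlane.coe_I, dist_eq_norm, hsub, norm_div, div_pow, him,
    ← Complex.normSq_eq_norm_sq (_ + _ * I), Complex.normSq_add_mul_I, UpperHalfPlane.I_im]
  have := norm_ne_zero_iff.mpr hdenom
  push_cast
  field_simp
  ring

theorem smul_I_eq_I_iff {g : SL(2, ℤ)} : g • UpperHalfPlane.I = UpperHalfPlane.I ↔
    (g 0 0 - g 1 1) ^ 2 + (g 0 1 + g 1 0) ^ 2 = 0 := by
  have hcosh : Real.cosh (dist (g • UpperHalfPlane.I) UpperHalfPlane.I) = 1 ↔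
      g • UpperHalfPlane.I = UpperHalfPlane.I := by
    rw [← dist_eq_zero (x := g • UpperHalfPlane.I), ← not_iff_not,
      ← ne_eq (dist _ UpperHalfPlane.I), ← Real.one_lt_cosh, (Real.one_le_cosh _).lt_iff_ne']
  rw [← hcosh, cosh_dist_smul_I, add_eq_left, div_eq_zero_iff, or_iff_left two_ne_zero,
    Int.cast_eq_zero]

theorem eq_one_or_eq_neg_one_or_mul_self_of_smul_I_eq {g : SL(2, ℤ)}
    (h : g • UpperHalfPlane.I = UpperHalfPlane.I) : g = 1 ∨ g = -1 ∨ g * g = -1 := by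
  have hsum := smul_I_eq_I_iff.mp h
  have hdet : g 0 0 * g 1 1 - g 0 1 * g 1 0 = 1 := by
    rw [← Matrix.det_fin_two]
    exact g.det_coe
  have hd : g 1 1 = g 0 0 := by nlinarith
  have hc : g 1 0 = -g 0 1 := by nlinarith
  rw [hd, hc] at hdet
  have ha : g 0 0 = 0 ∨ g 0 0 = 1 ∨ g 0 0 = -1 := by
    rw [← Int.abs_le_one_iff, ← sq_le_one_iff_abs_le_one]
    nlinarith [sq_nonneg (g 0 1)]
  rcases ha with ha | ha | ha
  · have hb : g 0 1 * g 0 1 = 1 := by nlinarith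
    refine .inr (.inr ?_)
    ext i j
    fin_cases i <;> fin_cases j <;> simp [Matrix.mul_apply, ha, hb, hc, hd]
  · have hb : g 0 1 = 0 := by nlinarith
    refine .inl ?_
    ext i j
    fin_cases i <;> fin_cases j <;> simp [ha, hb, hc, hd]
  · have hb : g 0 1 = 0 := by nlinarith
    refine .inr (.inl ?_)
    ext i j
    fin_cases i <;> fin_cases j <;> simp [ha, hb, hc, hd]

theorem sq_le_sq_add_sq_of_dvd {n x y : ℤ} (hx : n ∣ x) (hy : n ∣ y) (h : x ^ 2 + y ^ 2 ≠ 0) :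
    n ^ 2 ≤ x ^ 2 + y ^ 2 := by
  obtain ⟨u, rfl⟩ := hx
  obtain ⟨v, rfl⟩ := hy
  have huv : u ^ 2 + v ^ 2 ≠ 0 := fun h0 => h (by linear_combination n ^ 2 * h0)
  have : 0 < u ^ 2 + v ^ 2 := lt_of_le_of_ne (by positivity) huv.symm
  nlinarith [sq_nonneg n]

theorem two_mul_arsinh_le_dist_smul_I {N : ℕ} {g : SL(2, ℤ)} (hg : g ∈ CongruenceSubgroup.Gamma N)
    (hI : g • UpperHalfPlane.I ≠ UpperHalfPlane.I) :
    2 * Real.arsinh (N / 2) ≤ dist (g • UpperHalfPlane.I) UpperHalfPlane.I := by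
  obtain ⟨ha, hb, hc, hd⟩ := CongruenceSubgroup.Gamma_mem.mp hg
  have hN : (N : ℤ) ^ 2 ≤ (g 0 0 - g 1 1) ^ 2 + (g 0 1 + g 1 0) ^ 2 :=
    sq_le_sq_add_sq_of_dvd ((ZMod.intCast_zmod_eq_zero_iff_dvd _ N).mp (by simp [ha, hd]))
      ((ZMod.intCast_zmod_eq_zero_iff_dvd _ N).mp (by simp [hb, hc]))
      (smul_I_eq_I_iff.not.mp hI)
  have hN' : (N : ℝ) ^ 2 ≤ ((g 0 0 - g 1 1) ^ 2 + (g 0 1 + g 1 0) ^ 2 : ℤ) := by exact_mod_cast hN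
  have harsinh : 0 ≤ Real.arsinh (N / 2) := Real.arsinh_nonneg_iff.mpr (by positivity)
  rw [← abs_of_nonneg (mul_nonneg zero_le_two harsinh),
    ← abs_of_nonneg (dist_nonneg (x := g • UpperHalfPlane.I)), ← Real.cosh_le_cosh,
    cosh_dist_smul_I, Real.cosh_two_mul, Real.cosh_sq', Real.sinh_arsinh]
  linarith

theorem sinh_two_mul_artanh {x : ℝ} (hx : x ∈ Set.Ioo (-1) 1) :
    Real.sinh (2 * Real.artanh x) = 2 * x / (1 - x ^ 2) := by
  have : 0 ≤ 1 - x ^ 2 := by nlinarith [hx.1, hx.2]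
  rw [Real.sinh_two_mul, Real.sinh_artanh hx, Real.cosh_artanh hx, mul_one_div, mul_div_assoc',
    div_div, Real.mul_self_sqrt this]

theorem lt_tanh_half_arsinh {x y : ℝ} (hx : x ∈ Set.Ioo (-1) 1) (h : 2 * x / (1 - x ^ 2) < y) :
    x < Real.tanh (Real.arsinh y / 2) := by
  rw [← Real.artanh_lt_artanh_iff hx ⟨Real.neg_one_lt_tanh _, Real.tanh_lt_one _⟩,
    Real.artanh_tanh, lt_div_iff₀' two_pos, ← Real.sinh_lt_sinh, Real.sinh_arsinh,
    sinh_two_mul_artanh hx]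
  exact h

theorem sqrt_lt_tanh_half_arsinh {x y : ℝ} (hx : x ∈ Set.Ico 0 1) (h : 4 * √x / (1 - x) < y) :
    √x < Real.tanh (Real.arsinh (y / 2) / 2) := by
  have hsqrt : √x ∈ Set.Ioo (-1) 1 :=
    ⟨neg_one_lt_zero.trans_le (Real.sqrt_nonneg x),
      (Real.sqrt_lt' one_pos).mpr (by simpa using hx.2)⟩
  refine lt_tanh_half_arsinh hsqrt ?_
  rw [Real.sq_sqrt hx.1]
  calc 2 * √x / (1 - x) = 4 * √x / (1 - x) / 2 := by ring
    _ < y / 2 := by gcongr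

end HyperbolicDisplacement

section MultiplierSystem

theorem act_eq_smul (g : SL2Z) (z : ℍ) : act g z = ↑(g • z) := by
  rw [UpperHalfPlane.coe_specialLinearGroup_apply]
  simp [act, entry]

namespace IsMultiplierSystem

variable {Γ : Subgroup SL2Z} {η : Γ → ℂ → ℂ}

theorem apply_mul (hη : IsMultiplierSystem Γ η) (γ₁ γ₂ : Γ) (z : ℍ) :
    η (γ₁ * γ₂) z = η γ₁ ↑(γ₂ • z) * η γ₂ z := by
  rw [hη.cocycle γ₁ γ₂ z z.im_pos, act_eq_smul]
  rfl

theorem apply_sq (hη : IsMultiplierSystem Γ η) (γ : Γ) (z : ℍ) :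
    η γ z ^ 2 = UpperHalfPlane.denom (γ : SL2Z) z :=
  hη.sq γ z z.im_pos

theorem apply_ne_zero (hη : IsMultiplierSystem Γ η) (γ : Γ) (z : ℍ) : η γ z ≠ 0 := by
  rw [← pow_ne_zero_iff two_ne_zero, hη.apply_sq]
  exact UpperHalfPlane.denom_ne_zero _ z

theorem apply_one (hη : IsMultiplierSystem Γ η) (z : ℍ) : η 1 z = 1 := by
  have h := hη.apply_mul 1 1 z
  rwa [one_smul, one_mul, eq_comm, mul_eq_right₀ (hη.apply_ne_zero 1 z)] at h

theorem neg_one_notMem (hη : IsMultiplierSystem Γ η) : -1 ∉ Γ := by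
  intro hmem
  have hmul := hη.apply_mul ⟨-1, hmem⟩ ⟨-1, hmem⟩ UpperHalfPlane.I
  have hsq := hη.apply_sq ⟨-1, hmem⟩ UpperHalfPlane.I
  have hsmul : (⟨-1, hmem⟩ : Γ) • UpperHalfPlane.I = UpperHalfPlane.I := by
    rw [Subgroup.mk_smul, ModularGroup.SL_neg_smul, one_smul]
  rw [show (⟨-1, hmem⟩ * ⟨-1, hmem⟩ : Γ) = 1 from Subtype.ext (by simp),
    hη.apply_one, hsmul, ← pow_two, hsq, ModularGroup.denom_apply] at hmul
  norm_num at hmul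

theorem smul_I_ne (hη : IsMultiplierSystem Γ η) {γ : Γ} (hγ : γ ≠ 1) :
    γ • UpperHalfPlane.I ≠ UpperHalfPlane.I := by
  intro h
  rcases eq_one_or_eq_neg_one_or_mul_self_of_smul_I_eq (g := γ) h with h1 | h1 | h1
  · exact hγ (Subtype.ext h1)
  · exact hη.neg_one_notMem (h1 ▸ γ.2)
  · exact hη.neg_one_notMem (h1 ▸ mul_mem γ.2 γ.2)

theorem norm_zpow_neg_mul_im_rpow (hη : IsMultiplierSystem Γ η) (γ : Γ) (n : ℤ) (z : ℍ) :
    ‖η γ z ^ (-n)‖ * z.im ^ (n / 4 : ℝ) = (γ • z).im ^ (n / 4 : ℝ) := by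
  have hpos : 0 < ‖η γ z‖ := norm_pos_iff.mpr (hη.apply_ne_zero γ z)
  have him : (γ • z).im = z.im / ‖η γ z‖ ^ 4 := by
    rw [show ‖η γ z‖ ^ 4 = ‖η γ z ^ 2‖ ^ 2 by rw [norm_pow, ← pow_mul], hη.apply_sq,
      ← Complex.normSq_eq_norm_sq]
    exact ModularGroup.im_smul_eq_div_normSq _ z
  have hrpow : (‖η γ z‖ ^ 4) ^ (n / 4 : ℝ) = ‖η γ z‖ ^ n := by
    rw [← Real.rpow_natCast_mul hpos.le, Nat.cast_ofNat, mul_div_cancel₀ _ four_ne_zero,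
      Real.rpow_intCast]
  rw [him, Real.div_rpow z.im_pos.le (by positivity), hrpow, zpow_neg, norm_inv, norm_zpow,
    inv_mul_eq_div]

end IsMultiplierSystem

end MultiplierSystem

section CayleyTransform

/-- The Cayley transform, which maps the upper half-plane onto the unit disc and `i` to `0`. -/
def cayley (z : ℂ) : ℂ := (z - I) / (z + I)

/-- The inverse of the Cayley transform, which maps the unit disc onto the upper half-plane. -/
def cayleyInv (w : ℂ) : ℂ := I * (1 + w) / (1 - w)

theorem cayley_cayleyInv {w : ℂ} (hw : w ≠ 1) : cayley (cayleyInv w) = w := by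
  have h1 : 1 - w ≠ 0 := sub_ne_zero.mpr hw.symm
  have hsub : cayleyInv w - I = 2 * I * w / (1 - w) := by
    rw [cayleyInv]
    field_simp
    ring
  have hadd : cayleyInv w + I = 2 * I / (1 - w) := by
    rw [cayleyInv]
    field_simp
    ring
  rw [cayley, hsub, hadd, div_div_div_cancel_right₀ h1, mul_div_cancel_left₀ _
    (mul_ne_zero two_ne_zero I_ne_zero)]

theorem cayleyInv_cayley {z : ℂ} (hz : z + I ≠ 0) : cayleyInv (cayley z) = z := by
  have hsub : 1 - cayley z = 2 * I / (z + I) := by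
    rw [cayley]
    field_simp
    ring
  have hadd : 1 + cayley z = 2 * z / (z + I) := by
    rw [cayley]
    field_simp
    ring
  rw [cayleyInv, hsub, hadd]
  field_simp

theorem im_cayleyInv (w : ℂ) : (cayleyInv w).im = (1 - ‖w‖ ^ 2) / ‖1 - w‖ ^ 2 := by
  rw [cayleyInv, Complex.div_im, ← sub_div, ← Complex.normSq_eq_norm_sq,
    ← Complex.normSq_eq_norm_sq]
  congr 1
  simp only [mul_im, I_re, add_im, one_im, I_im, add_re, one_re, sub_re, mul_re, sub_im,
    normSq_apply]
  ring

theorem hasDerivAt_cayleyInv {w : ℂ} (hw : w ≠ 1) :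
    HasDerivAt cayleyInv (2 * I / (1 - w) ^ 2) w := by
  have h := (((hasDerivAt_id w).const_add 1).const_mul I).div ((hasDerivAt_id w).const_sub 1)
    (sub_ne_zero.mpr hw.symm)
  convert! h using 1
  simp only [id]
  ring

theorem one_sub_sq_norm_cayley {z : ℂ} (hz : z + I ≠ 0) :
    1 - ‖cayley z‖ ^ 2 = 4 * z.im / ‖z + I‖ ^ 2 := by
  have hnorm : ‖z + I‖ ^ 2 ≠ 0 := by positivity
  rw [cayley, norm_div, div_pow, eq_div_iff hnorm, sub_mul, div_mul_cancel₀ _ hnorm, one_mul,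
    ← Complex.normSq_eq_norm_sq, ← Complex.normSq_eq_norm_sq]
  simp only [normSq_apply, add_re, I_re, add_im, I_im, sub_re, sub_im]
  ring

theorem coe_add_I_ne_zero (z : ℍ) : (z : ℂ) + I ≠ 0 := fun h => by
  have : z.im + 1 = 0 := by simpa using congrArg Complex.im h
  linarith [z.im_pos]

theorem sq_norm_cayley_lt_one (z : ℍ) : ‖cayley z‖ ^ 2 < 1 := by
  have h := one_sub_sq_norm_cayley (coe_add_I_ne_zero z)
  have := norm_pos_iff.mpr (coe_add_I_ne_zero z)
  have : 0 < 4 * z.im / ‖(z : ℂ) + I‖ ^ 2 := by have := z.im_pos; positivity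
  exact sub_pos.mp (h.symm ▸ this)

theorem measurable_sq_norm_cayley : Measurable fun z : ℍ => ‖cayley z‖ ^ 2 := by
  unfold cayley
  fun_prop

theorem ne_one_of_mem_ball {w : ℂ} (hw : w ∈ Metric.ball 0 1) : w ≠ 1 := by
  rintro rfl
  simp at hw

theorem bijOn_cayleyInv :
    Set.BijOn cayleyInv (Metric.ball 0 1) (Set.range ((↑) : ℍ → ℂ)) := by
  refine Set.InvOn.bijOn ⟨fun w hw => cayley_cayleyInv (ne_one_of_mem_ball hw), ?_⟩
    (fun w hw => ?_) ?_
  · rintro _ ⟨z, rfl⟩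
    exact cayleyInv_cayley (coe_add_I_ne_zero z)
  · have : 0 < ‖1 - w‖ := norm_pos_iff.mpr (sub_ne_zero.mpr (ne_one_of_mem_ball hw).symm)
    have : 0 < 1 - ‖w‖ ^ 2 := by
      rw [sub_pos, sq_lt_one_iff₀ (norm_nonneg w)]
      exact mem_ball_zero_iff.mp hw
    exact ⟨⟨cayleyInv w, by rw [im_cayleyInv]; positivity⟩, rfl⟩
  · rintro _ ⟨z, rfl⟩
    rw [mem_ball_zero_iff, ← sq_lt_one_iff₀ (norm_nonneg _)]
    exact sq_norm_cayley_lt_one z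

theorem norm_cayley_eq_tanh (z : ℍ) :
    ‖cayley z‖ = Real.tanh (dist z UpperHalfPlane.I / 2) := by
  rw [UpperHalfPlane.tanh_half_dist, cayley, norm_div]
  simp [Complex.dist_eq]

theorem dist_I_lt_iff {z : ℍ} {r : ℝ} :
    dist z UpperHalfPlane.I < r ↔ ‖cayley z‖ < Real.tanh (r / 2) := by
  have hmem (x : ℝ) : Real.tanh x ∈ Set.Ioo (-1) 1 := ⟨Real.neg_one_lt_tanh x, Real.tanh_lt_one x⟩
  rw [norm_cayley_eq_tanh, ← Real.artanh_lt_artanh_iff (hmem _) (hmem _), Real.artanh_tanh,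
    Real.artanh_tanh, div_lt_div_iff_of_pos_right two_pos]

end CayleyTransform

section RadialIntegration

theorem lintegral_comp_sq_norm {g : ℝ → ℝ≥0∞} (hg : Measurable g) :
    ∫⁻ w : ℂ, g (‖w‖ ^ 2) = ENNReal.ofReal π * ∫⁻ t in Set.Ioi 0, g t := by
  have himage : (fun r : ℝ => r ^ 2) '' Set.Ioi 0 = Set.Ioi 0 := by
    refine Set.Subset.antisymm (Set.image_subset_iff.mpr fun r hr => ?_) fun t ht => ?_
    · exact pow_pos (Set.mem_Ioi.mp hr) 2
    · exact ⟨√t, Real.sqrt_pos.mpr ht, Real.sq_sqrt (le_of_lt ht)⟩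
  have hsubst : ∫⁻ t in Set.Ioi 0, g t =
      2 * ∫⁻ r in Set.Ioi (0 : ℝ), ENNReal.ofReal r * g (r ^ 2) := by
    rw [← lintegral_const_mul _ (by fun_prop)]
    conv_lhs => rw [← himage]
    rw [lintegral_image_eq_lintegral_abs_deriv_mul measurableSet_Ioi
      (fun r _ => (hasDerivAt_pow 2 r).hasDerivWithinAt)
      (fun r hr s hs h => (pow_left_inj₀ (le_of_lt hr) (le_of_lt hs) two_ne_zero).mp h)]
    refine setLIntegral_congr_fun measurableSet_Ioi fun r hr => ?_
    rw [← mul_assoc, ← ENNReal.ofReal_ofNat 2, ← ENNReal.ofReal_mul zero_le_two]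
    simp [abs_of_pos (Set.mem_Ioi.mp hr)]
  rw [hsubst, ← Complex.lintegral_comp_polarCoord_symm, polarCoord_target,
    Measure.volume_eq_prod, ← Measure.prod_restrict]
  simp only [Complex.norm_polarCoord_symm, sq_abs, smul_eq_mul]
  calc ∫⁻ p, ENNReal.ofReal p.1 * g (p.1 ^ 2)
        ∂(volume.restrict (Set.Ioi 0)).prod (volume.restrict (Set.Ioo (-π) π))
      = (∫⁻ r in Set.Ioi 0, ENNReal.ofReal r * g (r ^ 2)) * ∫⁻ _ in Set.Ioo (-π) π, 1 := by
        rw [← lintegral_prod_mul (by fun_prop) (by fun_prop)]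
        simp only [mul_one]
    _ = ENNReal.ofReal π * (2 * ∫⁻ r in Set.Ioi 0, ENNReal.ofReal r * g (r ^ 2)) := by
        rw [setLIntegral_one, Real.volume_Ioo, sub_neg_eq_add, ← two_mul,
          ENNReal.ofReal_mul zero_le_two, ENNReal.ofReal_ofNat]
        ring

theorem lintegral_upperHalfPlane (f : ℂ → ℝ≥0∞) :
    ∫⁻ z : ℍ, f z = ∫⁻ z in Set.range ((↑) : ℍ → ℂ), ENNReal.ofReal (1 / z.im ^ 2) * f z := by
  have hcoe : MeasurePreserving UpperHalfPlane.coe (volume.comap UpperHalfPlane.coe)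
      (volume.restrict (Set.range UpperHalfPlane.coe)) :=
    ⟨UpperHalfPlane.measurable_coe, by rw [UpperHalfPlane.measurableEmbedding_coe.map_comap]⟩
  rw [← hcoe.lintegral_comp_emb UpperHalfPlane.measurableEmbedding_coe, UpperHalfPlane.volume_def,
    lintegral_withDensity_eq_lintegral_mul_non_measurable]
  · refine lintegral_congr fun z => congrArg (· * f z) ?_
    rw [ENNReal.ofReal, ENNReal.coe_inj]
    ext
    rw [Real.coe_toNNReal _ (by positivity)]
    simp
  · fun_prop
  · exact .of_forall fun z => ENNReal.coe_lt_top

theorem det_restrictScalars_toSpanSingleton (c : ℂ) :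
    ((ContinuousLinearMap.toSpanSingleton ℂ c).restrictScalars ℝ).det = ‖c‖ ^ 2 := by
  rw [← Complex.normSq_eq_norm_sq, ← Algebra.norm_complex_apply, ContinuousLinearMap.det,
    ContinuousLinearMap.coe_restrictScalars, LinearMap.det_restrictScalars,
    ContinuousLinearMap.toLinearMap_toSpanSingleton, LinearMap.det_ring,
    LinearMap.toSpanSingleton_apply, one_smul]

theorem lintegral_upperHalfPlane_eq_setLIntegral_ball (f : ℂ → ℝ≥0∞) :
    ∫⁻ z : ℍ, f z =
      ∫⁻ w in Metric.ball 0 1, ENNReal.ofReal (4 / (1 - ‖w‖ ^ 2) ^ 2) * f (cayleyInv w) := by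
  rw [lintegral_upperHalfPlane, ← bijOn_cayleyInv.image_eq,
    lintegral_image_eq_lintegral_abs_det_fderiv_mul volume Metric.isOpen_ball.measurableSet
      (fun w hw => ((hasDerivAt_cayleyInv (ne_one_of_mem_ball hw)).hasFDerivAt.restrictScalars
        ℝ).hasFDerivWithinAt) bijOn_cayleyInv.injOn]
  refine setLIntegral_congr_fun Metric.isOpen_ball.measurableSet fun w hw => ?_
  have h1 : ‖1 - w‖ ≠ 0 := norm_ne_zero_iff.mpr (sub_ne_zero.mpr (ne_one_of_mem_ball hw).symm)
  have h2 : 1 - ‖w‖ ^ 2 ≠ 0 :=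
    (sub_pos.mpr ((sq_lt_one_iff₀ (norm_nonneg w)).mpr (mem_ball_zero_iff.mp hw))).ne'
  rw [det_restrictScalars_toSpanSingleton, im_cayleyInv, norm_div, norm_pow, norm_mul, norm_I,
    Complex.norm_two, ← mul_assoc, ← ENNReal.ofReal_mul (abs_nonneg _),
    abs_of_nonneg (by positivity)]
  congr 2
  field_simp
  norm_num

theorem setLIntegral_comp_sq_norm_cayley {g : ℝ → ℝ≥0∞} (hg : Measurable g) {s : Set ℝ}
    (hs : MeasurableSet s) :
    ∫⁻ z in {z : ℍ | ‖cayley z‖ ^ 2 ∈ s}, g (‖cayley z‖ ^ 2) =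
      ENNReal.ofReal π * ∫⁻ t in s ∩ Set.Ioo 0 1, ENNReal.ofReal (4 / (1 - t) ^ 2) * g t := by
  set h : ℝ → ℝ≥0∞ := fun t => ENNReal.ofReal (4 / (1 - t) ^ 2) * s.indicator g t
  have hball (w : ℂ) : (Metric.ball 0 1).indicator (fun w => h (‖w‖ ^ 2)) w =
      (Set.Iio 1).indicator h (‖w‖ ^ 2) := by
    simp only [Set.indicator, mem_ball_zero_iff, Set.mem_Iio, sq_lt_one_iff₀ (norm_nonneg w)]
  calc ∫⁻ z in {z : ℍ | ‖cayley z‖ ^ 2 ∈ s}, g (‖cayley z‖ ^ 2)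
      = ∫⁻ z : ℍ, s.indicator g (‖cayley z‖ ^ 2) :=
        (lintegral_indicator (measurable_sq_norm_cayley hs) _).symm
    _ = ∫⁻ w in Metric.ball (0 : ℂ) 1, h (‖w‖ ^ 2) := by
        rw [lintegral_upperHalfPlane_eq_setLIntegral_ball fun z => s.indicator g (‖cayley z‖ ^ 2)]
        refine setLIntegral_congr_fun Metric.isOpen_ball.measurableSet fun w hw => ?_
        rw [cayley_cayleyInv (ne_one_of_mem_ball hw)]
    _ = ∫⁻ w : ℂ, (Set.Iio 1).indicator h (‖w‖ ^ 2) := by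
        rw [← lintegral_indicator Metric.isOpen_ball.measurableSet]
        exact lintegral_congr hball
    _ = ENNReal.ofReal π * ∫⁻ t in Set.Ioo 0 1, h t := by
        have hh : Measurable h := by
          have := hg.indicator hs
          fun_prop
        rw [lintegral_comp_sq_norm (hh.indicator measurableSet_Iio),
          lintegral_indicator measurableSet_Iio, Measure.restrict_restrict measurableSet_Iio,
          Set.Iio_inter_Ioi]
    _ = ENNReal.ofReal π * ∫⁻ t in s ∩ Set.Ioo 0 1, ENNReal.ofReal (4 / (1 - t) ^ 2) * g t := by
        have hind : h = s.indicator fun t => ENNReal.ofReal (4 / (1 - t) ^ 2) * g t :=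
          funext fun _ =>
            (Set.indicator_mul_right s (fun t => ENNReal.ofReal (4 / (1 - t) ^ 2)) g).symm
        rw [hind, lintegral_indicator hs, Measure.restrict_restrict hs]

end RadialIntegration

section Median

variable {f : ℝ → ℝ} {a b : ℝ}

theorem intervalIntegral_lt_of_median_lt (hf : IntervalIntegrable f volume a b)
    (hpos : ∀ t ∈ Set.Ioo a b, 0 < f t) {c r : ℝ} (hac : a ≤ c) (hcr : c < r) (hrb : r ≤ b)
    (hmed : ∫ t in c..b, f t ≤ ∫ t in a..c, f t) :
    ∫ t in r..b, f t < ∫ t in a..r, f t := by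
  have hsub {x y : ℝ} (hax : a ≤ x) (hxy : x ≤ y) (hyb : y ≤ b) :
      IntervalIntegrable f volume x y := by
    refine hf.mono_set ?_
    rw [Set.uIcc_of_le hxy, Set.uIcc_of_le (hax.trans (hxy.trans hyb))]
    exact Set.Icc_subset_Icc hax hyb
  have hcr_int := hsub hac hcr.le hrb
  have hcr_pos : 0 < ∫ t in c..r, f t :=
    intervalIntegral.intervalIntegral_pos_of_pos_on hcr_int
      (fun t ht => hpos t ⟨hac.trans_lt ht.1, ht.2.trans_le hrb⟩) hcr
  have hleft := intervalIntegral.integral_add_adjacent_intervals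
    (hsub le_rfl hac (hcr.le.trans hrb)) hcr_int
  have hright := intervalIntegral.integral_add_adjacent_intervals
    hcr_int (hsub (hac.trans hcr.le) hrb le_rfl)
  linarith

theorem setLIntegral_Ioo_ofReal_eq (hab : a ≤ b) (hf : IntervalIntegrable f volume a b)
    (hpos : ∀ t ∈ Set.Ioo a b, 0 ≤ f t) :
    ∫⁻ t in Set.Ioo a b, ENNReal.ofReal (f t) = ENNReal.ofReal (∫ t in a..b, f t) := by
  rw [intervalIntegral.integral_of_le hab, integral_Ioc_eq_integral_Ioo,
    ofReal_integral_eq_lintegral_ofReal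
      ((intervalIntegrable_iff_integrableOn_Ioo_of_le hab).mp hf)
      (ae_restrict_of_forall_mem measurableSet_Ioo hpos)]

theorem setLIntegral_Ioo_lt_of_median_lt (hf : IntervalIntegrable f volume a b)
    (hpos : ∀ t ∈ Set.Ioo a b, 0 < f t) {c r : ℝ} (hac : a < c) (hcr : c < r) (hrb : r ≤ b)
    (hmed : ∫ t in c..b, f t ≤ ∫ t in a..c, f t) :
    ∫⁻ t in Set.Ioo r b, ENNReal.ofReal (f t) < ∫⁻ t in Set.Ioo a r, ENNReal.ofReal (f t) := by
  have har : a < r := hac.trans hcr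
  have hleft : IntervalIntegrable f volume a r :=
    hf.mono_set (Set.uIcc_subset_uIcc_left (Set.mem_uIcc_of_le har.le hrb))
  have hright : IntervalIntegrable f volume r b :=
    hf.mono_set (Set.uIcc_subset_uIcc_right (Set.mem_uIcc_of_le har.le hrb))
  have hleft_pos : ∀ t ∈ Set.Ioo a r, 0 < f t := fun t ht => hpos t ⟨ht.1, ht.2.trans_le hrb⟩
  rw [setLIntegral_Ioo_ofReal_eq har.le hleft fun t ht => (hleft_pos t ht).le,
    setLIntegral_Ioo_ofReal_eq hrb hright fun t ht => (hpos t ⟨har.trans ht.1, ht.2⟩).le,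
    ENNReal.ofReal_lt_ofReal_iff
      (intervalIntegral.intervalIntegral_pos_of_pos_on hleft hleft_pos har)]
  exact intervalIntegral_lt_of_median_lt hf hpos hac.le hcr hrb hmed

end Median

section BetaIntegral

theorem intervalIntegrable_rpow_mul_one_sub_rpow {a b : ℝ} (ha : -1 < a) (hb : -1 < b) :
    IntervalIntegrable (fun t => t ^ a * (1 - t) ^ b) volume 0 1 := by
  have hbeta : IntervalIntegrable (fun t : ℝ => (t : ℂ) ^ (a : ℂ) * (1 - (t : ℂ)) ^ (b : ℂ))
      volume 0 1 := by
    simpa using Complex.betaIntegral_convergent (u := a + 1) (v := b + 1)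
      (by simpa using neg_lt_iff_pos_add.mp ha) (by simpa using neg_lt_iff_pos_add.mp hb)
  refine hbeta.norm.congr_uIoo fun t ht => ?_
  rw [Set.uIoo_of_le zero_le_one] at ht
  beta_reduce
  rw [← ofReal_one, ← ofReal_sub, norm_mul, norm_cpow_eq_rpow_re_of_pos ht.1,
    norm_cpow_eq_rpow_re_of_pos (sub_pos.mpr ht.2), ofReal_re, ofReal_re]

theorem setLIntegral_rpow_sq_norm_cayley (a b : ℝ) {s : Set ℝ} (hs : MeasurableSet s) :
    ∫⁻ z in {z : ℍ | ‖cayley z‖ ^ 2 ∈ s},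
        ENNReal.ofReal ((‖cayley z‖ ^ 2) ^ a * (1 - ‖cayley z‖ ^ 2) ^ b) =
      ENNReal.ofReal (4 * π) *
        ∫⁻ t in s ∩ Set.Ioo 0 1, ENNReal.ofReal (t ^ a * (1 - t) ^ (b - 2)) := by
  rw [setLIntegral_comp_sq_norm_cayley (g := fun t => ENNReal.ofReal (t ^ a * (1 - t) ^ b))
    (by fun_prop) hs, mul_comm 4, ENNReal.ofReal_mul Real.pi_pos.le, mul_assoc,
    ← lintegral_const_mul (ENNReal.ofReal 4) (by fun_prop)]
  congr 1
  refine setLIntegral_congr_fun (hs.inter measurableSet_Ioo) fun t ht => ?_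
  have h1 : 0 < 1 - t := sub_pos.mpr ht.2.2
  rw [← ENNReal.ofReal_mul (by positivity), ← ENNReal.ofReal_mul zero_le_four,
    Real.rpow_sub h1, Real.rpow_two]
  congr 1
  ring

theorem lintegral_compl_ball_lt_lintegral_ball {a b : ℝ} (ha : -1 < a) (hb : 1 < b) {M r : ℝ}
    (hM : 0 < M) (hMr : √M < Real.tanh (r / 2))
    (hmed : ∫ t in M..1, t ^ a * (1 - t) ^ (b - 2) ≤ ∫ t in 0..M, t ^ a * (1 - t) ^ (b - 2)) :
    ∫⁻ z in (Metric.ball UpperHalfPlane.I r)ᶜ,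
        ENNReal.ofReal ((‖cayley z‖ ^ 2) ^ a * (1 - ‖cayley z‖ ^ 2) ^ b) <
      ∫⁻ z in Metric.ball UpperHalfPlane.I r,
        ENNReal.ofReal ((‖cayley z‖ ^ 2) ^ a * (1 - ‖cayley z‖ ^ 2) ^ b) := by
  set R := Real.tanh (r / 2) ^ 2
  have htanh : 0 ≤ Real.tanh (r / 2) := (Real.sqrt_nonneg M).trans hMr.le
  have hMR : M < R := (Real.sqrt_lt' ((Real.sqrt_nonneg M).trans_lt hMr)).mp hMr
  have hR0 : 0 < R := hM.trans hMR
  have hR1 : R ≤ 1 := (Real.tanh_sq_lt_one _).le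
  have hball : Metric.ball UpperHalfPlane.I r = {z : ℍ | ‖cayley z‖ ^ 2 ∈ Set.Iio R} := by
    ext z
    exact dist_I_lt_iff.trans (sq_lt_sq₀ (norm_nonneg _) htanh).symm
  have hcompl : (Metric.ball UpperHalfPlane.I r)ᶜ = {z : ℍ | ‖cayley z‖ ^ 2 ∈ (Set.Iio R)ᶜ} := by
    rw [hball]
    rfl
  have hinner : Set.Iio R ∩ Set.Ioo 0 1 = Set.Ioo 0 R := by
    rw [Set.inter_comm, Set.Ioo_inter_Iio, min_eq_right hR1]
  have houter : ((Set.Iio R)ᶜ ∩ Set.Ioo 0 1 : Set ℝ) =ᵐ[volume] Set.Ioo R 1 := by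
    have hinter : Set.Ioi R ∩ Set.Ioo 0 1 = Set.Ioo R 1 := by
      rw [Set.inter_comm, Set.Ioo_inter_Ioi, max_eq_right hR0.le]
    rw [Set.compl_Iio, ← hinter]
    exact Ioi_ae_eq_Ici.symm.inter (ae_eq_refl _)
  rw [hcompl, hball, setLIntegral_rpow_sq_norm_cayley _ _ measurableSet_Iio.compl,
    setLIntegral_rpow_sq_norm_cayley _ _ measurableSet_Iio, hinner, setLIntegral_congr houter]
  refine (ENNReal.mul_lt_mul_iff_right (by positivity) ENNReal.ofReal_ne_top).mpr ?_
  refine setLIntegral_Ioo_lt_of_median_lt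
    (intervalIntegrable_rpow_mul_one_sub_rpow ha (by linarith)) (fun t ht => ?_) hM hMR hR1 hmed
  have h1 : 0 < 1 - t := sub_pos.mpr ht.2
  have h0 : 0 < t := ht.1
  positivity

end BetaIntegral

section PoincareSeries

theorem norm_fkm_mul_im_rpow (m : ℝ) (k : ℕ) (z : ℍ) :
    ‖fkm m k z‖ * z.im ^ (m / 2) =
      (‖cayley z‖ ^ 2) ^ (k / 2 : ℝ) * (1 - ‖cayley z‖ ^ 2) ^ (m / 2) := by
  have hp : 0 < ‖(z : ℂ) + I‖ := norm_pos_iff.mpr (coe_add_I_ne_zero z)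
  have hpow {x : ℝ} (hx : 0 ≤ x) (s : ℝ) : (x ^ 2) ^ (s / 2) = x ^ s := by
    rw [← Real.rpow_natCast_mul hx, Nat.cast_ofNat, mul_div_cancel₀ s two_ne_zero]
  have hfkm : ‖fkm m k z‖ = 2 ^ m * ‖(z : ℂ) - I‖ ^ k / ‖(z : ℂ) + I‖ ^ (m + k) := by
    rw [fkm, norm_div, norm_mul, norm_pow, ← ofReal_natCast, ← ofReal_add, norm_cpow_real,
      norm_cpow_real, norm_mul, norm_I, mul_one, Complex.norm_two]
  have hcayley : (‖cayley z‖ ^ 2) ^ (k / 2 : ℝ) = ‖(z : ℂ) - I‖ ^ k / ‖(z : ℂ) + I‖ ^ k := by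
    rw [hpow (norm_nonneg _), Real.rpow_natCast, cayley, norm_div, div_pow]
  have him : (1 - ‖cayley z‖ ^ 2) ^ (m / 2) =
      2 ^ m * z.im ^ (m / 2) / ‖(z : ℂ) + I‖ ^ m := by
    have hz := z.im_pos.le
    rw [one_sub_sq_norm_cayley (coe_add_I_ne_zero z), UpperHalfPlane.coe_im,
      Real.div_rpow (by positivity) (by positivity), Real.mul_rpow zero_le_four hz,
      show (4 : ℝ) = 2 ^ 2 by norm_num, hpow zero_le_two, hpow hp.le]
  rw [hfkm, hcayley, him, Real.rpow_add hp, Real.rpow_natCast]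
  ring

theorem norm_PTerm_mul_im_rpow {Γ : Subgroup SL2Z} {η : Γ → ℂ → ℂ}
    (hη : IsMultiplierSystem Γ η) {χ : Γ →* ℂˣ} {γ : Γ} (hχ : ‖(χ γ : ℂ)‖ = 1)
    {m : ℝ} {j : ℕ} (hm : m = 5 / 2 + j) (k : ℕ) (z : ℍ) :
    ‖PTerm Γ η χ m j k γ z‖ * z.im ^ (m / 2) =
      (‖cayley ↑(γ • z)‖ ^ 2) ^ (k / 2 : ℝ) * (1 - ‖cayley ↑(γ • z)‖ ^ 2) ^ (m / 2) := by
  have hexp : m / 2 = ((5 + 2 * j : ℤ) : ℝ) / 4 := by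
    rw [hm]
    push_cast
    ring
  rw [← norm_fkm_mul_im_rpow, PTerm, norm_mul, norm_mul, RCLike.norm_conj, hχ, one_mul,
    act_eq_smul, mul_assoc, hexp, hη.norm_zpow_neg_mul_im_rpow]
  rfl

theorem HasFiniteOrderChar.norm_eq_one {Γ : Subgroup SL2Z} {χ : Γ →* ℂˣ}
    (hχ : HasFiniteOrderChar Γ χ) (γ : Γ) : ‖(χ γ : ℂ)‖ = 1 := by
  obtain ⟨n, hn, hpow⟩ := hχ
  exact norm_eq_one_of_pow_eq_one (congrArg Units.val (hpow γ)) hn.ne'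

theorem mem_Gamma_of_dvd {N : ℕ} {g : SL(2, ℤ)} (h : (N : ℤ) ∣ g 0 0 - 1 ∧ (N : ℤ) ∣ g 0 1 ∧
    (N : ℤ) ∣ g 1 0 ∧ (N : ℤ) ∣ g 1 1 - 1) : g ∈ CongruenceSubgroup.Gamma N := by
  rw [CongruenceSubgroup.Gamma_mem]
  simpa only [← ZMod.intCast_zmod_eq_zero_iff_dvd, Int.cast_sub, Int.cast_one, sub_eq_zero] using h

end PoincareSeries

theorem stmt4_general (N : ℕ) (Γ : Subgroup SL2Z) (hΓ : Γ ≤ CongruenceSubgroup.Gamma N)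
    (η : Γ → ℂ → ℂ) (hη : IsMultiplierSystem Γ η)
    (χ : Γ →* ℂˣ) (hχ : ∀ γ : Γ, ‖(χ γ : ℂ)‖ = 1)
    (m : ℝ) (j : ℕ) (hm : m = 5 / 2 + j) (k : ℕ) (M : ℝ) (hM : M ∈ Set.Ioo (0 : ℝ) 1)
    (hmed : ∫ t in M..(1 : ℝ), t ^ ((k : ℝ) / 2) * (1 - t) ^ (m / 2 - 2) ≤
      ∫ t in (0 : ℝ)..M, t ^ ((k : ℝ) / 2) * (1 - t) ^ (m / 2 - 2))
    (hNM : (N : ℝ) > 4 * M ^ ((1 : ℝ) / 2) / (1 - M)) :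
    ∃ z ∈ UH, PoincareP Γ η χ m j k z ≠ 0 := by
  set H : ℍ → ℝ≥0∞ := fun z =>
    ENNReal.ofReal ((‖cayley z‖ ^ 2) ^ (k / 2 : ℝ) * (1 - ‖cayley z‖ ^ 2) ^ (m / 2))
  have hH : Measurable H := by
    have := measurable_sq_norm_cayley
    fun_prop
  have hT (γ : Γ) (z : ℍ) :
      ‖PTerm Γ η χ m j k γ z‖ₑ * ENNReal.ofReal (z.im ^ (m / 2)) = H (γ • z) := by
    rw [← ofReal_norm, ← ENNReal.ofReal_mul (norm_nonneg _),
      norm_PTerm_mul_im_rpow hη (hχ γ) hm k z]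
  have hMr : √M < Real.tanh (Real.arsinh (N / 2) / 2) :=
    sqrt_lt_tanh_half_arsinh (Set.Ioo_subset_Ico_self hM) (by rwa [Real.sqrt_eq_rpow])
  have hdisj (γ : Γ) (hγ : γ ≠ 1) : Disjoint (Metric.ball UpperHalfPlane.I (Real.arsinh (N / 2)))
      (γ • Metric.ball UpperHalfPlane.I (Real.arsinh (N / 2))) :=
    disjoint_ball_smul_ball (g := (γ : SL2Z))
      (two_mul_arsinh_le_dist_smul_I (hΓ γ.2) (hη.smul_I_ne hγ))
  have hk : -1 < (k / 2 : ℝ) := by linarith [k.cast_nonneg (α := ℝ)]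
  have hm2 : 1 < m / 2 := by linarith [j.cast_nonneg (α := ℝ)]
  obtain ⟨z, hz⟩ := exists_tsum_ne_zero_of_lintegral_compl_lt hH measurableSet_ball hT hdisj
    (lintegral_compl_ball_lt_lintegral_ball hk hm2 hM.1 hMr hmed)
  exact ⟨z, z.im_pos, hz⟩

theorem stmt4 (N : ℕ) (hN : 0 < N) (Γ : Subgroup SL2Z) (hΓ : Γ.FiniteIndex)
    (hcong : ∀ γ : Γ,
      (N : ℤ) ∣ (((γ : SL2Z) : Matrix (Fin 2) (Fin 2) ℤ) 0 0 - 1) ∧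
      (N : ℤ) ∣ (((γ : SL2Z) : Matrix (Fin 2) (Fin 2) ℤ) 0 1) ∧
      (N : ℤ) ∣ (((γ : SL2Z) : Matrix (Fin 2) (Fin 2) ℤ) 1 0) ∧
      (N : ℤ) ∣ (((γ : SL2Z) : Matrix (Fin 2) (Fin 2) ℤ) 1 1 - 1))
    (η : Γ → ℂ → ℂ) (hη : IsMultiplierSystem Γ η)
    (χ : Γ →* ℂˣ) (hχ : HasFiniteOrderChar Γ χ)
    (m : ℝ) (j : ℕ) (hm : m = 5 / 2 + j)
    (hmI : ∀ γ : Γ, ((γ : SL2Z) : Matrix (Fin 2) (Fin 2) ℤ) = -1 →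
      (χ γ : ℂ) = η γ I ^ (-(5 + 2 * (j : ℤ))))
    (k : ℕ) (M : ℝ) (hM : M ∈ Set.Ioo (0 : ℝ) 1)
    (hmed : ∫ t in (0 : ℝ)..M, t ^ ((k : ℝ) / 2) * (1 - t) ^ (m / 2 - 2) =
      ∫ t in M..(1 : ℝ), t ^ ((k : ℝ) / 2) * (1 - t) ^ (m / 2 - 2))
    (hNM : (N : ℝ) > 4 * M ^ ((1 : ℝ) / 2) / (1 - M)) :
    ∃ z ∈ UH, PoincareP Γ η χ m j k z ≠ 0 :=
  stmt4_general N Γ (fun γ hγ => mem_Gamma_of_dvd (hcong ⟨γ, hγ⟩)) η hη χ hχ.norm_eq_one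
    m j hm k M hM hmed.ge hNM
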